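/- arXiv:2301.13440 — 2 statements merged into one kernel-verified Lean document; each statement's English description precedes it below -/
import Mathlib

section
/- Let H be a finite group with a normal subgroup N of odd order such that |H : N| = 2, let x ∈ H be an involution, and let θ ∈ Irr(N) satisfy θ^x = θ̄ ≠ θ. Then the Frobenius–Schur indicator of the induced character θ^H satisfies ε(θ^H) = (1/|C_N(x)|) ∑_{y ∈ C_N(x)} θ(y); in particular this sum is a real number. -/
open scoped BigOperators
attribute [local instance] Classical.propDecidable

noncomputable section

/-- `χ` is an irreducible complex character of the group `G`. -/
def IsIrrChar (G : Type) [Group G] (χ : G → ℂ) : Prop :=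
  ∃ V : FDRep ℂ G, CategoryTheory.Simple V ∧ χ = V.character

/-- Frobenius–Schur indicator of a class function. -/
def FS (G : Type) [Group G] [Fintype G] (χ : G → ℂ) : ℂ :=
  (∑ g : G, χ (g ^ 2)) / (Fintype.card G : ℂ)

/-- The character of `G` induced from a character of the subgroup `H`. -/
def indChar {G : Type} [Group G] [Fintype G] (H : Subgroup G) (θ : ↥H → ℂ) : G → ℂ :=
  fun g => (∑ s : G, if h : s * g * s⁻¹ ∈ H then θ ⟨s * g * s⁻¹, h⟩ else 0) / (Nat.card H : ℂ)

/-- The conjugate character `θ^g : n ↦ θ (g n g⁻¹)` of a character of a subgroup `H`. -/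
def conjChar {G : Type} [Group G] (H : Subgroup G) (θ : ↥H → ℂ) (g : G) : ↥H → ℂ :=
  fun n => if h : g * (n : G) * g⁻¹ ∈ H then θ ⟨g * (n : G) * g⁻¹, h⟩ else 0

/-- The complex conjugate character. -/
def starChar {α : Type} (θ : α → ℂ) : α → ℂ := fun a => (starRingEnd ℂ) (θ a)

/-! Since `θ^H` is induced and every `h²` lies in `N`, `ε(θ^H) = |N|⁻¹ ∑ θ(h²)`, summed over all
`h ∈ H`. Squaring permutes `N`, so the part over `h ∈ N` is `∑ θ = 0` because `θ` is nontrivial. On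
the other coset, `h ^ |N|` is an involution commuting with `h`, and it is `N`-conjugate to `x`
because `N` has odd order; hence `h` is `N`-conjugate to some `c x` with `c ∈ C_N(x)`, by exactly
`|C_N(x)|` elements of `N`, and `(c x)² = c²`. Squaring permutes `C_N(x)` too. -/

section Involutions

variable {G : Type*} [Group G] {N : Subgroup G} {h x z : G}

theorem pow_natCard_eq_one_of_mem (hh : h ∈ N) : h ^ Nat.card N = 1 :=
  orderOf_dvd_iff_pow_eq_one.1 (N.orderOf_dvd_natCard hh)

theorem pow_eq_self_of_odd {m : ℕ} (hm : Odd m) (hx : x ^ 2 = 1) : x ^ m = x := by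
  obtain ⟨k, rfl⟩ := hm
  rw [pow_succ, pow_mul, hx, one_pow, one_mul]

theorem notMem_of_odd_card_of_sq_eq_one (hN : Odd (Nat.card N)) (hx : x ^ 2 = 1) (hx1 : x ≠ 1) :
    x ∉ N :=
  fun hxN => hx1 <| by rw [← pow_eq_self_of_odd hN hx, pow_natCard_eq_one_of_mem hxN]

theorem exists_conj_eq_of_sq_eq_one (hN : Odd (Nat.card N)) (hx : x ^ 2 = 1) (hz : z ^ 2 = 1)
    (hzx : z * x ∈ N) : ∃ v ∈ N, v * x * v⁻¹ = z := by
  have hcop : Nat.Coprime 2 (orderOf (z * x)) :=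
    (hN.of_dvd_nat (N.orderOf_dvd_natCard hzx)).coprime_two_left
  obtain ⟨m, hm⟩ := exists_pow_eq_self_of_coprime hcop
  -- As `x` inverts `z * x`, conjugating `x` by a square root `v` of `z * x` gives `v ^ 2 * x = z`.
  have hinv : SemiconjBy x (z * x)⁻¹ (z * x) := by
    have hzi : z⁻¹ = z := inv_eq_of_mul_eq_one_left (by rw [← sq, hz])
    rw [SemiconjBy, mul_inv_rev, mul_inv_cancel_left, hzi, mul_assoc, ← sq, hx, mul_one]
  refine ⟨(z * x) ^ m, N.pow_mem hzx m, ?_⟩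
  calc (z * x) ^ m * x * ((z * x) ^ m)⁻¹
      = (z * x) ^ m * ((z * x) ^ m * x) := by rw [mul_assoc, ← inv_pow, (hinv.pow_right m).eq]
    _ = (z * x) * x := by rw [← mul_assoc, ← sq, ← pow_mul, mul_comm m 2, pow_mul, hm]
    _ = z := by rw [mul_assoc, ← sq, hx, mul_one]

theorem commute_iff_pow_card_eq (hN : Odd (Nat.card N)) (hx : x ^ 2 = 1) (hhx : h * x ∈ N) :
    Commute h x ↔ h ^ Nat.card N = x := by
  refine ⟨fun hc => ?_, fun e => e ▸ Commute.self_pow h _⟩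
  have hpow : h ^ Nat.card N * x = 1 := by
    rw [← pow_natCard_eq_one_of_mem hhx, hc.mul_pow, pow_eq_self_of_odd hN hx]
  rw [eq_inv_of_mul_eq_one_left hpow, inv_eq_of_mul_eq_one_left (by rw [← sq, hx])]

theorem sq_mem_of_mul_mem [N.Normal] (hx : x ^ 2 = 1) (hhx : h * x ∈ N) : h ^ 2 ∈ N := by
  have hsq : h ^ 2 = h * x * (x⁻¹ * (h * x) * x) := by
    calc h ^ 2 = h * h * (x * x) := by rw [← sq x, hx, mul_one, sq]
      _ = h * x * (x⁻¹ * (h * x) * x) := by group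
  exact hsq ▸ N.mul_mem hhx (Subgroup.Normal.conj_mem' ‹_› _ hhx x)

theorem pow_mul_mem_of_odd [N.Normal] {m : ℕ} (hm : Odd m) (hx : x ^ 2 = 1) (hhx : h * x ∈ N) :
    h ^ m * x ∈ N := by
  obtain ⟨k, rfl⟩ := hm
  rw [pow_succ, pow_mul, mul_assoc]
  exact N.mul_mem (N.pow_mem (sq_mem_of_mul_mem hx hhx) k) hhx

theorem exists_commute_conj [N.Normal] (hN : Odd (Nat.card N)) (hx : x ^ 2 = 1)
    (hhx : h * x ∈ N) : ∃ v ∈ N, Commute (v⁻¹ * h * v) x := by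
  have hz : (h ^ Nat.card N) ^ 2 = 1 := by
    rw [← pow_mul, mul_comm, pow_mul, pow_natCard_eq_one_of_mem (sq_mem_of_mul_mem hx hhx)]
  obtain ⟨v, hv, hvz⟩ := exists_conj_eq_of_sq_eq_one hN hx hz (pow_mul_mem_of_odd hN hx hhx)
  refine ⟨v, hv, (Commute.conj_iff v).1 ?_⟩
  rw [hvz, show v * (v⁻¹ * h * v) * v⁻¹ = h by group]
  exact Commute.self_pow h _

theorem conj_mul_mem [N.Normal] {u : G} (hu : u ∈ N) (hhx : h * x ∈ N) :
    u⁻¹ * h * u * x ∈ N := by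
  have hsplit : u⁻¹ * h * u * x = u⁻¹ * (h * x) * (x⁻¹ * u * x) := by group
  exact hsplit ▸ N.mul_mem (N.mul_mem (N.inv_mem hu) hhx) (Subgroup.Normal.conj_mem' ‹_› u hu x)

theorem commute_conj_iff_commute [N.Normal] {u : G} (hN : Odd (Nat.card N)) (hx : x ^ 2 = 1)
    (hhx : h * x ∈ N) (hc : Commute h x) (hu : u ∈ N) :
    Commute (u⁻¹ * h * u) x ↔ Commute u x := by
  have hpow : (u⁻¹ * h * u) ^ Nat.card N = u⁻¹ * x * u := by
    simpa [(commute_iff_pow_card_eq hN hx hhx).1 hc] using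
      conj_pow (a := u⁻¹) (b := h) (i := Nat.card N)
  rw [commute_iff_pow_card_eq hN hx (conj_mul_mem hu hhx), hpow, mul_assoc,
    inv_mul_eq_iff_eq_mul, eq_comm]
  rfl

end Involutions

section CosetSum

variable {G M : Type*} [Group G] [AddCommMonoid M] {N : Subgroup G} {x : G}

/-- The centralizer `C_N(x)`, as a subgroup of `N`; the element `x` need not lie in `N`. -/
abbrev centralizerIn (N : Subgroup G) (x : G) : Subgroup N :=
  (Subgroup.centralizer {x}).subgroupOf N

theorem mem_centralizerIn {n : N} : n ∈ centralizerIn N x ↔ Commute (n : G) x :=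
  Subgroup.mem_subgroupOf.trans Subgroup.mem_centralizer_singleton_iff

theorem sum_filter_commute_eq_sum_centralizerIn [Fintype N] (f : N → M) :
    ∑ n ∈ Finset.univ.filter (fun n : N => Commute (n : G) x), f n =
      ∑ c : centralizerIn N x, f c :=
  Finset.sum_subtype _ (fun n => by simp [mem_centralizerIn]) f

theorem card_filter_commute_eq_card_centralizerIn [Fintype N] :
    (Finset.univ.filter fun n : N => Commute (n : G) x).card = Nat.card (centralizerIn N x) := by
  rw [Finset.card_eq_sum_ones, sum_filter_commute_eq_sum_centralizerIn]
  simp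

theorem card_commute_conj_eq_card_centralizerIn [N.Normal] {h : G} (hN : Odd (Nat.card N))
    (hx : x ^ 2 = 1) (hhx : h * x ∈ N) :
    Nat.card {v : N // Commute ((v : G)⁻¹ * h * v) x} = Nat.card (centralizerIn N x) := by
  obtain ⟨v₀, hv₀, hc⟩ := exists_commute_conj hN hx hhx
  refine Nat.card_congr ((Equiv.mulLeft (⟨v₀, hv₀⟩⁻¹ : N)).subtypeEquiv fun v => ?_)
  have hu : v₀⁻¹ * v ∈ N := N.mul_mem (N.inv_mem hv₀) v.2
  have hcancel : (v₀⁻¹ * v : G)⁻¹ * (v₀⁻¹ * h * v₀) * (v₀⁻¹ * v) = (v : G)⁻¹ * h * v := by group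
  rw [← hcancel, commute_conj_iff_commute hN hx (conj_mul_mem hv₀ hhx) hc hu]
  exact (mem_centralizerIn (n := ⟨v₀, hv₀⟩⁻¹ * v)).symm

theorem card_centralizerIn_nsmul_sum_coset [N.Normal] [Fintype N] (hN : Odd (Nat.card N))
    (hx : x ^ 2 = 1) (F : G → M) (hF : ∀ v ∈ N, ∀ g, F (v * g * v⁻¹) = F g) :
    Nat.card (centralizerIn N x) • ∑ n : N, F (n * x) =
      Nat.card N • ∑ c : centralizerIn N x, F (c * x) := by
  have hcount (n : N) : Nat.card (centralizerIn N x) • F (n * x) =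
      ∑ v : N, if Commute ((v : G)⁻¹ * (n * x) * v) x then F (n * x) else 0 := by
    have hmem : (n * x : G) * x ∈ N := by rw [mul_assoc, ← sq, hx, mul_one]; exact n.2
    rw [← card_commute_conj_eq_card_centralizerIn hN hx hmem, ← Finset.sum_filter,
      Finset.sum_const, Nat.card_eq_fintype_card, Fintype.card_subtype]
  have hconj (v : N) :
      ∑ n : N, (if Commute ((v : G)⁻¹ * (n * x) * v) x then F (n * x) else 0) =
        ∑ n : N, if Commute (n * x : G) x then F (n * x) else 0 := by
    let w : N := ⟨x * v * x⁻¹, Subgroup.Normal.conj_mem ‹_› _ v.2 x⟩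
    refine Fintype.sum_equiv ((Equiv.mulLeft v⁻¹).trans (Equiv.mulRight w)) _ _ fun n => ?_
    have hvn : ((v⁻¹ * n * w : N) * x : G) = (v : G)⁻¹ * (n * x) * v := by simp [w, mul_assoc]
    have hFvn : F ((v : G)⁻¹ * (n * x) * v) = F (n * x) := by
      simpa using hF _ (N.inv_mem v.2) (n * x)
    simp only [Equiv.trans_apply, Equiv.coe_mulLeft, Equiv.coe_mulRight, hvn, hFvn]
  have hcomm (n : N) : Commute (n * x : G) x ↔ Commute (n : G) x := by
    rw [commute_iff_eq, ← mul_assoc, mul_left_inj, commute_iff_eq]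
  calc Nat.card (centralizerIn N x) • ∑ n : N, F (n * x)
      = ∑ v : N, ∑ n : N, if Commute ((v : G)⁻¹ * (n * x) * v) x then F (n * x) else 0 := by
        rw [Finset.smul_sum, Finset.sum_comm, Finset.sum_congr rfl fun n _ => hcount n]
    _ = Nat.card N • ∑ n : N, if Commute (n * x : G) x then F (n * x) else 0 := by
        simp only [hconj, Finset.sum_const, Finset.card_univ, Nat.card_eq_fintype_card]
    _ = Nat.card N • ∑ c : centralizerIn N x, F (c * x) := by
        simp only [hcomm, ← Finset.sum_filter]
        rw [sum_filter_commute_eq_sum_centralizerIn fun n : N => F (n * x)]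

theorem sum_eq_sum_add_sum_coset_of_index_two [Fintype G] (hidx : N.index = 2) (hx : x ∉ N)
    (f : G → M) : ∑ g, f g = ∑ n : N, f n + ∑ n : N, f (n * x) := by
  rw [← Fintype.sum_subtype_add_sum_subtype (· ∈ N) f]
  congr 1
  refine (Fintype.sum_equiv ((Equiv.mulRight x).subtypeEquiv fun g => ?_) _ _ fun _ => rfl).symm
  simp [Subgroup.mul_mem_iff_of_index_two hidx, hx]

theorem sum_sq_eq_sum_of_odd_card [Fintype G] (hG : Odd (Nat.card G)) (f : G → M) :
    ∑ g, f (g ^ 2) = ∑ g, f g :=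
  (powCoprime hG.coprime_two_right).sum_comp f

end CosetSum

section Characters

theorem sum_character_subgroup {k G : Type*} [Field k] [Group G] (V : FDRep k G) (K : Subgroup G)
    [Fintype K] [NeZero (Nat.card K : k)] :
    ∑ g : K, V.character g =
      Nat.card K * Module.finrank k (Representation.invariants (V.ρ.comp K.subtype)) := by
  have hcard : (Nat.card K : k) ≠ 0 := NeZero.ne _
  let : Invertible (Nat.card K : k) := invertibleOfNonzero hcard
  rw [← Representation.card_inv_mul_sum_char_eq_finrank, mul_inv_cancel_left₀ hcard]
  rfl

theorem isIrrChar_one (G : Type) [Group G] [Finite G] : IsIrrChar G 1 := by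
  cases nonempty_fintype G
  let W : FDRep ℂ G := FDRep.of (Representation.trivial ℂ G ℂ)
  have hW : W.character = 1 := by
    ext g
    exact (LinearMap.trace_one ℂ ℂ).trans (by simp)
  exact ⟨W, (FDRep.simple_iff_char_is_norm_one W).2 (by simp [hW]), hW.symm⟩

variable {G : Type} [Group G] {θ χ : G → ℂ}

theorem IsIrrChar.apply_conj (hθ : IsIrrChar G θ) (g h : G) : θ (h * g * h⁻¹) = θ g := by
  obtain ⟨V, -, rfl⟩ := hθ
  exact V.char_conj g h

theorem IsIrrChar.sum_mul_inv_eq_zero [Fintype G] (hθ : IsIrrChar G θ) (hχ : IsIrrChar G χ)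
    (hne : θ ≠ χ) : ∑ g, θ g * χ g⁻¹ = 0 := by
  obtain ⟨V, hV, rfl⟩ := hθ
  obtain ⟨W, hW, rfl⟩ := hχ
  have hcard : (Nat.card G : ℂ) ≠ 0 := Nat.cast_ne_zero.2 Nat.card_pos.ne'
  let : Invertible (Nat.card G : ℂ) := invertibleOfNonzero hcard
  have horth := FDRep.char_orthonormal V W
  rw [if_neg fun ⟨e⟩ => hne (FDRep.char_iso e)] at horth
  exact (mul_eq_zero.1 horth).resolve_left (inv_ne_zero hcard)

theorem IsIrrChar.sum_eq_zero [Fintype G] (hθ : IsIrrChar G θ) (hθ1 : θ ≠ 1) : ∑ g, θ g = 0 := by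
  simpa using hθ.sum_mul_inv_eq_zero (isIrrChar_one G) hθ1

end Characters

section ZeroExtend

variable {G α : Type*} [Group G] [Zero α] {N : Subgroup G} {θ : N → α}

/-- The function `θ°` on `G` that agrees with `θ` on the subgroup and vanishes outside it. -/
def zeroExtend (N : Subgroup G) (θ : N → α) (g : G) : α :=
  if h : g ∈ N then θ ⟨g, h⟩ else 0

theorem zeroExtend_coe (n : N) : zeroExtend N θ n = θ n :=
  dif_pos n.2

theorem zeroExtend_conj (hθ : ∀ n v : N, θ (v * n * v⁻¹) = θ n) {v : G} (hv : v ∈ N)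
    (g : G) : zeroExtend N θ (v * g * v⁻¹) = zeroExtend N θ g := by
  by_cases hg : g ∈ N
  · exact (zeroExtend_coe (⟨v, hv⟩ * ⟨g, hg⟩ * ⟨v, hv⟩⁻¹ : N)).trans
      ((hθ _ _).trans (zeroExtend_coe ⟨g, hg⟩).symm)
  · have hg' : v * g * v⁻¹ ∉ N := fun h =>
      hg (by simpa [mul_assoc] using N.mul_mem (N.mul_mem (N.inv_mem hv) h) hv)
    rw [zeroExtend, zeroExtend, dif_neg hg, dif_neg hg']

end ZeroExtend

section FrobeniusSchur

variable {G : Type} [Group G] {N : Subgroup G} {θ : N → ℂ} {x : G}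

theorem FS_indChar_eq_sum_zeroExtend_sq [Fintype G] (N : Subgroup G) (θ : N → ℂ) :
    FS G (indChar N θ) = (∑ g, zeroExtend N θ (g ^ 2)) / Nat.card N := by
  have hshift (s : G) :
      ∑ g, zeroExtend N θ (s * g ^ 2 * s⁻¹) = ∑ g, zeroExtend N θ (g ^ 2) :=
    Fintype.sum_equiv (MulAut.conj s).toEquiv _ _ fun g => by simp [← conj_pow]
  have hsum : ∑ g, ∑ s, zeroExtend N θ (s * g ^ 2 * s⁻¹) =
      Fintype.card G * ∑ g, zeroExtend N θ (g ^ 2) := by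
    rw [Finset.sum_comm]
    simp [hshift]
  calc FS G (indChar N θ)
      = (∑ g, ∑ s, zeroExtend N θ (s * g ^ 2 * s⁻¹)) / Nat.card N / Fintype.card G := by
        rw [Finset.sum_div]
        rfl
    _ = (∑ g, zeroExtend N θ (g ^ 2)) / Nat.card N := by
        rw [hsum]
        field_simp

theorem FS_indChar_of_index_two [Fintype G] (hN : Odd (Nat.card N)) (hidx : N.index = 2)
    (hx : x ^ 2 = 1) (hxN : x ∉ N) (hθ : ∀ n v : N, θ (v * n * v⁻¹) = θ n) :
    FS G (indChar N θ) = (∑ n, θ n) / Nat.card N +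
      (∑ c : centralizerIn N x, θ c) / Nat.card (centralizerIn N x) := by
  have := Subgroup.normal_of_index_eq_two hidx
  have hsubgroup : ∑ n : N, zeroExtend N θ ((n : G) ^ 2) = ∑ n, θ n := by
    rw [← sum_sq_eq_sum_of_odd_card hN θ]
    exact Finset.sum_congr rfl fun n _ => zeroExtend_coe (n ^ 2)
  have hcentralizer : ∑ c : centralizerIn N x, zeroExtend N θ ((c * x : G) ^ 2) =
      ∑ c : centralizerIn N x, θ c := by
    have hodd := hN.of_dvd_nat (centralizerIn N x).card_subgroup_dvd_card
    rw [← sum_sq_eq_sum_of_odd_card hodd fun c => θ c]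
    refine Finset.sum_congr rfl fun c _ => ?_
    rw [(mem_centralizerIn.1 c.2).mul_pow, hx, mul_one]
    exact zeroExtend_coe (θ := θ) ((c : N) ^ 2)
  have hcoset := card_centralizerIn_nsmul_sum_coset hN hx (fun g => zeroExtend N θ (g ^ 2))
    fun v hv g => by rw [conj_pow, zeroExtend_conj hθ hv]
  rw [hcentralizer, nsmul_eq_mul, nsmul_eq_mul] at hcoset
  rw [FS_indChar_eq_sum_zeroExtend_sq, sum_eq_sum_add_sum_coset_of_index_two hidx hxN, hsubgroup,
    add_div]
  congr 1
  have hcard (K : Type) [Group K] [Finite K] : (Nat.card K : ℂ) ≠ 0 :=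
    Nat.cast_ne_zero.2 Nat.card_pos.ne'
  rw [div_eq_div_iff (hcard N) (hcard _), mul_comm, hcoset, mul_comm]

end FrobeniusSchur

theorem stmt6_general {H : Type} [Group H] [Fintype H] (N : Subgroup H)
    (hodd : Odd (Nat.card N)) (hidx : N.index = 2)
    (x : H) (hx2 : x ^ 2 = 1) (hx1 : x ≠ 1)
    (θ : ↥N → ℂ) (hθ : IsIrrChar ↥N θ) (hθ1 : θ ≠ 1) :
    FS H (indChar N θ) =
      (∑ n ∈ Finset.univ.filter (fun n : ↥N => (n : H) * x = x * (n : H)), θ n) /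
        ((Finset.univ.filter (fun n : ↥N => (n : H) * x = x * (n : H))).card : ℂ) ∧
    ∃ r : ℝ,
      (∑ n ∈ Finset.univ.filter (fun n : ↥N => (n : H) * x = x * (n : H)), θ n) = (r : ℂ) := by
  have hxN : x ∉ N := notMem_of_odd_card_of_sq_eq_one hodd hx2 hx1
  have hsum := sum_filter_commute_eq_sum_centralizerIn (x := x) θ
  have hcard := card_filter_commute_eq_card_centralizerIn (N := N) (x := x)
  simp only [commute_iff_eq] at hsum hcard
  rw [hsum, hcard]
  constructor
  · rw [FS_indChar_of_index_two hodd hidx hx2 hxN hθ.apply_conj, hθ.sum_eq_zero hθ1, zero_div,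
      zero_add]
  · obtain ⟨V, -, rfl⟩ := hθ
    rw [sum_character_subgroup]
    exact ⟨Nat.card (centralizerIn N x) * Module.finrank ℂ _, by push_cast; rfl⟩

/-- Let `N ⊴ H` of odd order and index 2, `x ∈ H` an involution, and
`θ ∈ Irr(N)` with `θ^x = θ̄ ≠ θ`. Then `ε(θ^H) = (1/|C_N(x)|) ∑_{y ∈ C_N(x)} θ(y)`;
in particular this sum is a real number. -/
theorem stmt6 {H : Type} [Group H] [Fintype H] (N : Subgroup H) [N.Normal]
    (hodd : Odd (Nat.card N)) (hidx : N.index = 2)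
    (x : H) (hx2 : x ^ 2 = 1) (hx1 : x ≠ 1)
    (θ : ↥N → ℂ) (hθ : IsIrrChar ↥N θ)
    (hconj : conjChar N θ x = starChar θ) (hnr : starChar θ ≠ θ) :
    FS H (indChar N θ) =
      (∑ n ∈ Finset.univ.filter (fun n : ↥N => (n : H) * x = x * (n : H)), θ n) /
        ((Finset.univ.filter (fun n : ↥N => (n : H) * x = x * (n : H))).card : ℂ) ∧
    ∃ r : ℝ, (∑ n ∈ Finset.univ.filter (fun n : ↥N => (n : H) * x = x * (n : H)), θ n) = (r : ℂ) :=
  stmt6_general N hodd hidx x hx2 hx1 θ hθ fun hθ1 => hnr (by ext n; simp [starChar, hθ1])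
end
end

section
/- Let H be a finite group with a normal subgroup N of odd order such that |H : N| = 2, let x ∈ H be an involution, and let θ ∈ Irr(N) satisfy θ^x = θ̄ ≠ θ. Then ε(θ^H) = 1; equivalently, ∑_{y ∈ C_N(x)} θ(y) = |C_N(x)|. -/
open scoped BigOperators
attribute [local instance] Classical.propDecidable

noncomputable section

/-! Write `σ` for conjugation by `x` on `N`. Since `(n x)² = n σ(n)`, the elements outside `N`
contribute the twisted indicator `ν = |N|⁻¹ ∑ n, θ (n σ(n))` to `ε(θ^H)`, and the elements of `N`
contribute `ε(θ)`, which is `⟨θ, 1⟩ = 0` since squaring permutes `N`. The condition `θ ∘ σ = θ̄`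
says that the representation `g ↦ ρ g ⊗ ρ (σ g)` has a line of invariants; `ν` is the scalar by
which the swap of the two tensor factors acts on it, so `ν ^ 2 = 1`. Because `N` has odd order,
every element of `N` is uniquely `s c s` with `σ s = s⁻¹` and `σ c = c`, and
`s c s σ(s c s) = s c² s⁻¹`; hence `ν` is also the average of `θ` over `C_N(x)`, a natural number.
So `ν = 1`. -/

section InvolutiveEndomorphism

variable {G : Type*} [Group G]

lemma sq_bijective_of_odd_card (hodd : Odd (Nat.card G)) :
    Function.Bijective fun g : G => g ^ 2 :=
  (powCoprime (Nat.coprime_two_right.2 hodd)).bijective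

lemma notMem_of_sq_eq_one_of_odd_card {H : Subgroup G} (hodd : Odd (Nat.card H)) {x : G}
    (hx2 : x ^ 2 = 1) (hx1 : x ≠ 1) : x ∉ H := by
  intro hx
  have hsq : (⟨x, hx⟩ : H) ^ 2 = 1 ^ 2 := Subtype.ext (by simpa using hx2)
  exact hx1 (congrArg Subtype.val ((sq_bijective_of_odd_card hodd).1 hsq))

/-- The subgroup `C_G(σ)` of elements fixed by the endomorphism `σ`. -/
abbrev fixedSubgroup (σ : G →* G) : Subgroup G :=
  σ.eqLocus (MonoidHom.id G)

/-- The elements `s` inverted by the endomorphism `σ`, the outer factors of the decomposition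
`g = s c s`. They need not form a subgroup, hence a subtype. -/
abbrev InvertedBy (σ : G →* G) : Type _ :=
  {s : G // σ s = s⁻¹}

variable {σ : G →* G}

lemma mul_map_of_inverted_of_fixed (s : InvertedBy σ) (c : fixedSubgroup σ) :
    (s * c * s * σ (s * c * s) : G) = s * (c : G) ^ 2 * (s : G)⁻¹ := by
  have hc : σ c = c := c.2
  rw [map_mul, map_mul, s.2, hc]
  simp [sq, mul_assoc]

variable (hσ : Function.Involutive σ) (hsq : Function.Bijective fun g : G => g ^ 2)
include hsq

lemma injective_inverted_mul_fixed_mul_inverted :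
    Function.Injective fun p : InvertedBy σ × fixedSubgroup σ => (p.1 * p.2 * p.1 : G) := by
  rintro ⟨s, c⟩ ⟨t, d⟩ (h : (s * c * s : G) = t * d * t)
  have hconj : (s * c * (s : G)⁻¹ : G) = t * d * (t : G)⁻¹ := by
    apply hsq.1
    simp only [conj_pow]
    rw [← mul_map_of_inverted_of_fixed, h, mul_map_of_inverted_of_fixed]
  have hst : (s : G) = t := by
    apply hsq.1
    calc (s : G) ^ 2 = (s * c * (s : G)⁻¹ : G)⁻¹ * (s * c * s) := by rw [sq]; group
      _ = (t * d * (t : G)⁻¹ : G)⁻¹ * (t * d * t) := by rw [hconj, h]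
      _ = (t : G) ^ 2 := by rw [sq]; group
  rw [hst] at hconj
  have hcd : (c : G) = d := mul_left_cancel (mul_right_cancel hconj)
  exact Prod.ext (Subtype.ext hst) (Subtype.ext hcd)

include hσ

lemma surjective_inverted_mul_fixed_mul_inverted :
    Function.Surjective fun p : InvertedBy σ × fixedSubgroup σ => (p.1 * p.2 * p.1 : G) := by
  intro g
  -- If `g = s c s`, then `v = s c s⁻¹` is the square root of `g σ(g)` and `s² = v⁻¹ g`.
  obtain ⟨v, hv⟩ : ∃ v, v ^ 2 = g * σ g := hsq.2 _
  have hσv : σ v = g⁻¹ * v * g := by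
    apply hsq.1
    calc σ v ^ 2 = σ g * g := by rw [← map_pow, hv, map_mul, hσ g]
      _ = g⁻¹ * v ^ 2 * g := by rw [hv]; group
      _ = (g⁻¹ * v * g) ^ 2 := by rw [sq, sq]; group
  obtain ⟨s, hs⟩ : ∃ s, s ^ 2 = v⁻¹ * g := hsq.2 _
  have hg : g = v * s ^ 2 := by rw [hs, mul_inv_cancel_left]
  have hσs : σ s = s⁻¹ := by
    apply hsq.1
    calc σ s ^ 2 = (σ v)⁻¹ * σ g := by rw [← map_pow, hs, map_mul, map_inv]
      _ = g⁻¹ * v⁻¹ * v ^ 2 := by rw [hσv, hv]; group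
      _ = (s ^ 2)⁻¹ := by rw [hs, sq]; group
      _ = s⁻¹ ^ 2 := (inv_pow s 2).symm
  have hc : σ (s⁻¹ * v * s) = s⁻¹ * v * s := by
    rw [map_mul, map_mul, map_inv, hσs, hσv, hg]
    group
  refine ⟨⟨⟨s, hσs⟩, ⟨_, hc⟩⟩, ?_⟩
  rw [hg, sq]
  group

lemma bijective_inverted_mul_fixed_mul_inverted :
    Function.Bijective fun p : InvertedBy σ × fixedSubgroup σ => (p.1 * p.2 * p.1 : G) :=
  ⟨injective_inverted_mul_fixed_mul_inverted hsq,
    surjective_inverted_mul_fixed_mul_inverted hσ hsq⟩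

end InvolutiveEndomorphism

/-- The Frobenius–Schur indicator of `χ` twisted by the endomorphism `σ`
(the Kawanaka–Matsuyama indicator); `σ = id` gives the usual indicator. It is meaningful only
when `|G|` is nonzero in `k`, as division by zero makes it `0` otherwise. -/
def twistedFS {G k : Type*} [Group G] [Fintype G] [Field k] (σ : G →* G) (χ : G → k) : k :=
  (∑ g, χ (g * σ g)) / Nat.card G

theorem twistedFS_eq_sum_fixedSubgroup_div {G k : Type*} [Group G] [Fintype G] [Field k]
    [NeZero (Nat.card G : k)] {σ : G →* G} (hσ : Function.Involutive σ)
    (hodd : Odd (Nat.card G)) {χ : G → k} (hχ : ∀ g h, χ (h * g * h⁻¹) = χ g) :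
    twistedFS σ χ = (∑ c : fixedSubgroup σ, χ c) / Nat.card (fixedSubgroup σ) := by
  have hbij := bijective_inverted_mul_fixed_mul_inverted hσ (sq_bijective_of_odd_card hodd)
  have hoddC : Odd (Nat.card (fixedSubgroup σ)) :=
    hodd.of_dvd_nat (Subgroup.card_subgroup_dvd_card _)
  have hsum : ∑ g, χ (g * σ g) = Nat.card (InvertedBy σ) * ∑ c : fixedSubgroup σ, χ c := by
    calc ∑ g, χ (g * σ g)
        = ∑ s : InvertedBy σ, ∑ c : fixedSubgroup σ, χ ((c ^ 2 : fixedSubgroup σ) : G) := by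
          rw [← hbij.sum_comp, Fintype.sum_prod_type]
          simp only [mul_map_of_inverted_of_fixed, hχ, SubmonoidClass.coe_pow]
      _ = ∑ _s : InvertedBy σ, ∑ c : fixedSubgroup σ, χ c := by
          rw [(sq_bijective_of_odd_card hoddC).sum_comp fun c : fixedSubgroup σ => χ c]
      _ = Nat.card (InvertedBy σ) * ∑ c : fixedSubgroup σ, χ c := by
          rw [Finset.sum_const, Finset.card_univ, nsmul_eq_mul, Nat.card_eq_fintype_card]
  have hcard : (Nat.card G : k) = Nat.card (InvertedBy σ) * Nat.card (fixedSubgroup σ) := by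
    rw [← Nat.cast_mul, ← Nat.card_prod, Nat.card_eq_of_bijective _ hbij]
  have hne : (Nat.card (InvertedBy σ) : k) ≠ 0 :=
    left_ne_zero_of_mul (hcard ▸ NeZero.ne (Nat.card G : k))
  rw [twistedFS, hsum, hcard, mul_div_mul_left _ _ hne]

section LinearAlgebra

lemma trace_comm_comp_map {R M : Type*} [CommRing R] [AddCommGroup M] [Module R M]
    [Module.Free R M] [Module.Finite R M] (f g : Module.End R M) :
    LinearMap.trace R _ ((TensorProduct.comm R M M).toLinearMap ∘ₗ TensorProduct.map f g) =
      LinearMap.trace R M (f * g) := by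
  nontriviality R
  let b := Module.finBasis R M
  rw [LinearMap.trace_eq_matrix_trace R (b.tensorProduct b), LinearMap.trace_eq_matrix_trace R b,
    LinearMap.toMatrix_mul, Matrix.trace_mul_comm]
  simp [Matrix.trace, Matrix.mul_apply, LinearMap.toMatrix_apply, Fintype.sum_prod_type, mul_comm]

lemma trace_comp_sq_eq_one_of_isProj {K V : Type*} [Field K] [AddCommGroup V] [Module K V]
    [FiniteDimensional K V] {p : Submodule K V} {P T : Module.End K V} (hP : LinearMap.IsProj p P)
    (hp : Module.finrank K p = 1) (hT : Function.Involutive T) (hTp : ∀ v ∈ p, T v ∈ p) :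
    LinearMap.trace K V (T ∘ₗ P) ^ 2 = 1 := by
  -- The involution `T` acts on the line `p` as a scalar `c` with `c² = 1`, which is the trace.
  obtain ⟨v, hv0, hv⟩ := finrank_eq_one_iff'.1 hp
  obtain ⟨c, hc⟩ := hv ⟨T v, hTp v v.2⟩
  have hTv : T v = c • (v : V) := (congrArg Subtype.val hc).symm
  have hc2 : c ^ 2 = 1 := by
    have h : (c ^ 2) • (v : V) = (1 : K) • (v : V) := by
      rw [sq, mul_smul, ← hTv, ← map_smul, ← hTv, hT, one_smul]
    exact smul_left_injective K (Subtype.coe_ne_coe.2 hv0) h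
  have hTP : T ∘ₗ P = c • P := by
    ext w
    obtain ⟨d, hd⟩ := hv ⟨P w, hP.map_mem w⟩
    have hPw : P w = d • (v : V) := (congrArg Subtype.val hd).symm
    rw [LinearMap.comp_apply, LinearMap.smul_apply, hPw, map_smul, hTv, smul_comm]
  rw [hTP, map_smul, hP.trace, hp, Nat.cast_one, smul_eq_mul, mul_one, hc2]

open scoped ComplexOrder Matrix

variable {𝕜 G n V : Type*} [RCLike 𝕜] [Group G] [Finite G]

lemma exists_posDef_conjTranspose_mul_mul_eq [Fintype n] [DecidableEq n] (A : G →* Matrix n n 𝕜) :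
    ∃ M : Matrix n n 𝕜, M.PosDef ∧ ∀ g, (A g)ᴴ * M * A g = M := by
  have := Fintype.ofFinite G
  refine ⟨∑ h, (A h)ᴴ * A h, ?_, fun g => ?_⟩
  · refine Matrix.posDef_sum Finset.univ_nonempty fun h _ => ?_
    exact Matrix.PosDef.conjTranspose_mul_self _
      (Matrix.mulVec_injective_of_isUnit ((Group.isUnit h).map A))
  · calc (A g)ᴴ * (∑ h, (A h)ᴴ * A h) * A g = ∑ h, (A (h * g))ᴴ * A (h * g) := by
          simp [Finset.mul_sum, Finset.sum_mul, Matrix.mul_assoc]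
      _ = ∑ h, (A h)ᴴ * A h := Equiv.sum_comp (Equiv.mulRight g) fun h => (A h)ᴴ * A h

lemma trace_map_inv_eq_star [Fintype n] [DecidableEq n] (A : G →* Matrix n n 𝕜) (g : G) :
    (A g⁻¹).trace = star (A g).trace := by
  obtain ⟨M, hM, hinv⟩ := exists_posDef_conjTranspose_mul_mul_eq A
  have hunit : IsUnit M.det := (Matrix.isUnit_iff_isUnit_det M).1 hM.isUnit
  have hintertwine : (A g)ᴴ * M = M * A g⁻¹ := by
    calc (A g)ᴴ * M = (A g)ᴴ * M * (A g * A g⁻¹) := by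
          rw [← map_mul, mul_inv_cancel, map_one, mul_one]
      _ = M * A g⁻¹ := by rw [← mul_assoc, hinv]
  rw [← Matrix.trace_conjTranspose, ← Matrix.trace_conj hM.isUnit (A g⁻¹), ← hintertwine,
    Matrix.mul_nonsing_inv_cancel_right _ _ hunit]

lemma character_inv_eq_star [AddCommGroup V] [Module 𝕜 V] [FiniteDimensional 𝕜 V]
    (ρ : Representation 𝕜 G V) (g : G) : ρ.character g⁻¹ = star (ρ.character g) := by
  let b := Module.finBasis 𝕜 V
  have htrace (h : G) : ρ.character h = (LinearMap.toMatrixAlgEquiv b (ρ h)).trace :=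
    LinearMap.trace_eq_matrix_trace 𝕜 b (ρ h)
  rw [htrace, htrace]
  exact trace_map_inv_eq_star ((LinearMap.toMatrixAlgEquiv b).toMulEquiv.toMonoidHom.comp ρ) g

end LinearAlgebra

section TwistedIndicator

variable {k G V : Type*} [Field k] [Group G] [AddCommGroup V] [Module k V]
  (ρ : Representation k G V) {σ : G →* G}

lemma comm_mem_invariants_tprod_comp (hσ : Function.Involutive σ) {w : TensorProduct k V V}
    (hw : w ∈ (ρ.tprod (ρ.comp σ)).invariants) :
    TensorProduct.comm k V V w ∈ (ρ.tprod (ρ.comp σ)).invariants := by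
  intro g
  have hcomm : ρ.tprod (ρ.comp σ) g ∘ₗ (TensorProduct.comm k V V).toLinearMap =
      (TensorProduct.comm k V V).toLinearMap ∘ₗ ρ.tprod (ρ.comp σ) (σ g) := by
    ext a b
    simp [hσ g]
  calc ρ.tprod (ρ.comp σ) g (TensorProduct.comm k V V w)
      = TensorProduct.comm k V V (ρ.tprod (ρ.comp σ) (σ g) w) := LinearMap.congr_fun hcomm w
    _ = TensorProduct.comm k V V w := by rw [hw]

variable [Fintype G] [FiniteDimensional k V]

lemma trace_comm_comp_averageMap (σ : G →* G) [Invertible (Fintype.card G : k)] :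
    LinearMap.trace k _
      ((TensorProduct.comm k V V).toLinearMap ∘ₗ (ρ.tprod (ρ.comp σ)).averageMap) =
      twistedFS σ ρ.character := by
  have haverage : (ρ.tprod (ρ.comp σ)).averageMap =
      (Nat.card G : k)⁻¹ • ∑ g, TensorProduct.map (ρ g) (ρ (σ g)) := by
    simp [GroupAlgebra.average, map_sum]
  have htrace (g : G) : LinearMap.trace k _ ((TensorProduct.comm k V V).toLinearMap ∘ₗ
      TensorProduct.map (ρ g) (ρ (σ g))) = ρ.character (g * σ g) := by
    rw [trace_comm_comp_map, ← map_mul, Representation.character]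
  rw [haverage, ← Module.End.mul_eq_comp, mul_smul_comm, Finset.mul_sum, map_smul, map_sum,
    smul_eq_mul, twistedFS, div_eq_inv_mul]
  simp only [Module.End.mul_eq_comp, htrace]

theorem twistedFS_character_sq_eq_one [NeZero (Nat.card G : k)] (hσ : Function.Involutive σ)
    (hinv : Module.finrank k (ρ.tprod (ρ.comp σ)).invariants = 1) :
    twistedFS σ ρ.character ^ 2 = 1 := by
  have : Invertible (Fintype.card G : k) :=
    invertibleOfNonzero (Fintype.card_eq_nat_card (α := G) ▸ NeZero.ne (Nat.card G : k))
  rw [← trace_comm_comp_averageMap]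
  exact trace_comp_sq_eq_one_of_isProj (Representation.isProj_averageMap _) hinv
    (TensorProduct.comm_comm k V V) fun _ => comm_mem_invariants_tprod_comp ρ hσ

theorem twistedFS_character_eq_finrank [NeZero (Nat.card G : k)] (hσ : Function.Involutive σ)
    (hodd : Odd (Nat.card G)) :
    twistedFS σ ρ.character =
      Module.finrank k (Representation.invariants (ρ.comp (fixedSubgroup σ).subtype)) := by
  have hdvd : (Nat.card (fixedSubgroup σ) : k) ∣ Nat.card G :=
    Nat.cast_dvd_cast (Subgroup.card_subgroup_dvd_card _)
  have : Invertible (Nat.card (fixedSubgroup σ) : k) :=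
    invertibleOfNonzero (ne_zero_of_dvd_ne_zero (NeZero.ne (Nat.card G : k)) hdvd)
  rw [twistedFS_eq_sum_fixedSubgroup_div hσ hodd fun g h => ρ.char_conj g h, div_eq_inv_mul,
    ← Representation.card_inv_mul_sum_char_eq_finrank]
  rfl

end TwistedIndicator

section Simple

open CategoryTheory

universe u v

variable {k : Type u} {G : Type v} [Field k] [IsAlgClosed k] [CharZero k] [Group G]
  (V : FDRep k G) [Simple V]

lemma finrank_invariants_tprod_comp_eq_one [Finite G] {σ : G →* G}
    (hχ : ∀ g, V.character (σ g) = V.character g⁻¹) :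
    Module.finrank k (Representation.tprod V.ρ (V.ρ.comp σ)).invariants = 1 := by
  have := Fintype.ofFinite G
  have : Invertible (Nat.card G : k) := invertibleOfNonzero (NeZero.ne _)
  have hfinrank :
      (Module.finrank k (Representation.tprod V.ρ (V.ρ.comp σ)).invariants : k) = 1 := by
    calc _ = (Nat.card G : k)⁻¹ * ∑ g, V.character g * V.character (σ g) := by
          rw [← Representation.card_inv_mul_sum_char_eq_finrank, Representation.char_tensor]
          rfl
      _ = (Nat.card G : k)⁻¹ * ∑ g, V.character g * V.character g⁻¹ := by simp only [hχ]
      _ = 1 := by rw [FDRep.char_orthonormal, if_pos ⟨Iso.refl V⟩]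
  exact_mod_cast hfinrank

theorem twistedFS_character_eq_one [Fintype G] {σ : G →* G} (hσ : Function.Involutive σ)
    (hodd : Odd (Nat.card G)) (hχ : ∀ g, V.character (σ g) = V.character g⁻¹) :
    twistedFS σ V.character = 1 := by
  have hsq : twistedFS σ V.character ^ 2 = 1 :=
    twistedFS_character_sq_eq_one V.ρ hσ (finrank_invariants_tprod_comp_eq_one V hχ)
  have hnat : twistedFS σ V.character = (_ : ℕ) := twistedFS_character_eq_finrank V.ρ hσ hodd
  rw [hnat] at hsq ⊢
  norm_cast at hsq ⊢
  simpa using hsq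

lemma sum_character_eq_zero {k G : Type u} [Field k] [IsAlgClosed k] [CharZero k] [Group G]
    [Fintype G] (V : FDRep k G) [Simple V] (hχ : V.character ≠ 1) :
    ∑ g, V.character g = 0 := by
  have : Invertible (Nat.card G : k) := invertibleOfNonzero (NeZero.ne _)
  let W : FDRep k G := FDRep.of (Representation.trivial k G k)
  have hW : W.character = 1 := by
    ext g
    exact (LinearMap.trace_one k k).trans (by simp)
  have : Simple W := by
    rw [FDRep.simple_iff_char_is_norm_one]
    simp [hW]
  have hVW : ¬ Nonempty (V ≅ W) := fun ⟨i⟩ => hχ ((FDRep.char_iso i).trans hW)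
  have horth := FDRep.char_orthonormal V W
  rw [if_neg hVW] at horth
  simpa [hW] using horth

end Simple

section IndexTwo

variable {G : Type*} [Group G] {N : Subgroup G} {x : G}

lemma sum_eq_sum_add_sum_mul_of_index_two [Fintype G] {M : Type*} [AddCommMonoid M]
    (hidx : N.index = 2) (hx : x ∉ N) (f : G → M) :
    ∑ g, f g = ∑ n : N, f n + ∑ n : N, f (n * x) := by
  have hcoset (g : G) : g ∈ N ↔ ¬ Equiv.mulRight x g ∈ N := by
    simp [Subgroup.mul_mem_iff_of_index_two hidx, hx]
  let e : N ≃ {g // ¬ g ∈ N} := (Equiv.mulRight x).subtypeEquiv hcoset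
  rw [← Fintype.sum_subtype_add_sum_subtype (· ∈ N) f, ← e.sum_comp]
  rfl

variable [N.Normal]

lemma conjNormal_involutive (hx : x ^ 2 = 1) :
    Function.Involutive (MulAut.conjNormal x : MulAut N) := by
  intro n
  rw [← MulAut.mul_apply, ← map_mul, ← sq, hx, map_one, MulAut.one_apply]

lemma mem_fixedSubgroup_conjNormal {n : N} :
    n ∈ fixedSubgroup (MulAut.conjNormal x : MulAut N).toMonoidHom ↔ (n : G) * x = x * n := by
  rw [eq_comm (a := (n : G) * x), ← mul_inv_eq_iff_eq_mul]
  exact Subtype.ext_iff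

end IndexTwo

section InducedCharacter

variable {G : Type} [Group G]

lemma conjChar_eq_comp_conjNormal {N : Subgroup G} [N.Normal] (θ : N → ℂ) (x : G) :
    conjChar N θ x = θ ∘ MulAut.conjNormal x :=
  funext fun n => dif_pos (MulAut.conjNormal x n).2

variable [Fintype G]

lemma FS_eq_sum_div_of_odd_card (hodd : Odd (Nat.card G)) (χ : G → ℂ) :
    FS G χ = (∑ g, χ g) / Fintype.card G := by
  rw [FS, (sq_bijective_of_odd_card hodd).sum_comp χ]

lemma FS_indChar (H : Subgroup G) (θ : H → ℂ) :
    FS G (indChar H θ) = (∑ g : G, if h : g ^ 2 ∈ H then θ ⟨g ^ 2, h⟩ else 0) / Nat.card H := by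
  let F (g : G) : ℂ := if h : g ∈ H then θ ⟨g, h⟩ else 0
  have hconj (s : G) : ∑ g, F (s * g ^ 2 * s⁻¹) = ∑ g, F (g ^ 2) := by
    rw [← Equiv.sum_comp (MulAut.conj s).toEquiv fun g => F (g ^ 2)]
    simp [conj_pow]
  have hcard : (Fintype.card G : ℂ) ≠ 0 := Nat.cast_ne_zero.2 Fintype.card_ne_zero
  calc FS G (indChar H θ)
      = (∑ s, ∑ g, F (s * g ^ 2 * s⁻¹)) / Nat.card H / Fintype.card G := by
        rw [Finset.sum_comm, Finset.sum_div]
        rfl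
    _ = (∑ g, F (g ^ 2)) / Nat.card H := by
        simp only [hconj, Finset.sum_const, Finset.card_univ, nsmul_eq_mul]
        field_simp

theorem FS_indChar_of_index_two_s7 {N : Subgroup G} [N.Normal] {x : G} (hidx : N.index = 2)
    (hx : x ∉ N) (hx2 : x ^ 2 = 1) (θ : N → ℂ) :
    FS G (indChar N θ) =
      FS N θ + twistedFS (MulAut.conjNormal x : MulAut N).toMonoidHom θ := by
  have hsq (n : N) : ((n : G) * x) ^ 2 = (n * MulAut.conjNormal x n : N) := by
    have hinv : x⁻¹ = x := inv_eq_of_mul_eq_one_left (sq x ▸ hx2)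
    rw [Subgroup.coe_mul, MulAut.conjNormal_apply, hinv, sq]
    group
  have hmem (g : G) : g ^ 2 ∈ N := Subgroup.sq_mem_of_index_two hidx g
  simp only [FS_indChar, dif_pos (hmem _)]
  rw [sum_eq_sum_add_sum_mul_of_index_two hidx hx, add_div, FS, twistedFS,
    Nat.card_eq_fintype_card]
  simp only [hsq]
  rfl

end InducedCharacter

/-- Let `N ⊴ H` of odd order and index 2, `x ∈ H` an involution, and
`θ ∈ Irr(N)` with `θ^x = θ̄ ≠ θ`. Then `ε(θ^H) = 1`; equivalently,
`∑_{y ∈ C_N(x)} θ(y) = |C_N(x)|`. -/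
theorem stmt7 {H : Type} [Group H] [Fintype H] (N : Subgroup H) [N.Normal]
    (hodd : Odd (Nat.card N)) (hidx : N.index = 2)
    (x : H) (hx2 : x ^ 2 = 1) (hx1 : x ≠ 1)
    (θ : ↥N → ℂ) (hθ : IsIrrChar ↥N θ)
    (hconj : conjChar N θ x = starChar θ) (hnr : starChar θ ≠ θ) :
    FS H (indChar N θ) = 1 ∧
    (∑ n ∈ Finset.univ.filter (fun n : ↥N => (n : H) * x = x * (n : H)), θ n) =
      ((Finset.univ.filter (fun n : ↥N => (n : H) * x = x * (n : H))).card : ℂ) := by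
  obtain ⟨V, hV, rfl⟩ := hθ
  let σ : N →* N := (MulAut.conjNormal x : MulAut N).toMonoidHom
  have hxN : x ∉ N := notMem_of_sq_eq_one_of_odd_card hodd hx2 hx1
  have hσ : Function.Involutive σ := conjNormal_involutive hx2
  have hχσ (n : N) : V.character (σ n) = V.character n⁻¹ := by
    rw [conjChar_eq_comp_conjNormal] at hconj
    exact (congrFun hconj n).trans (character_inv_eq_star V.ρ n).symm
  have hχ1 : V.character ≠ 1 := fun h => hnr <| by ext; simp [starChar, h]
  have htwisted : twistedFS σ V.character = 1 := twistedFS_character_eq_one V hσ hodd hχσ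
  constructor
  · rw [FS_indChar_of_index_two_s7 hidx hxN hx2, FS_eq_sum_div_of_odd_card hodd,
      sum_character_eq_zero V hχ1, htwisted, zero_div, zero_add]
  · rw [twistedFS_eq_sum_fixedSubgroup_div hσ hodd fun g h => V.char_conj g h,
      div_eq_one_iff_eq (Nat.cast_ne_zero.2 Nat.card_pos.ne')] at htwisted
    have hC (n : N) : n ∈ Finset.univ.filter (fun n : N => (n : H) * x = x * n) ↔
        n ∈ fixedSubgroup σ := by
      rw [mem_fixedSubgroup_conjNormal, Finset.mem_filter_univ]
    rw [Finset.sum_subtype _ hC, htwisted, Nat.card_eq_fintype_card, Fintype.card_of_subtype _ hC]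
end
end
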